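/- arXiv:1507.05929 — 2 statements merged into one kernel-verified Lean document; each statement's English description precedes it below -/
import Mathlib

section
/- Fix r ∈ (0,1) and λ ∈ [-1, 2r-1) with 2r-1 > -1. Let d ≥ 1 and let x, y be unit vectors in ℝ^d with ⟨x,y⟩ = λ. Then for every m, P(S_m(x,y) ≠ 0) ≤ m·μ_m(λ), and m·μ_m(λ) → 0 as m → ∞; consequently P(S_m(x,y) ≠ 0) → 0 as m → ∞. -/
open MeasureTheory ProbabilityTheory Filter Topology

noncomputable section

/-- Centered bivariate Gaussian pair `(w, v)` in which `w` and `v` are each standard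
normal and `E[w v] = lam`, realized as the law of `(z₁, lam·z₁ + √(1-lam²)·z₂)`
for independent standard normals `z₁, z₂`. -/
def gaussPair (lam : ℝ) : Measure (ℝ × ℝ) :=
  Measure.map (fun z : ℝ × ℝ => (z.1, lam * z.1 + Real.sqrt (1 - lam ^ 2) * z.2))
    ((gaussianReal 0 1).prod (gaussianReal 0 1))

/-- `μ(λ,h) = P(w ≥ h ∧ v ≥ h)`. -/
def mu (lam h : ℝ) : ℝ := (gaussPair lam {p : ℝ × ℝ | h ≤ p.1 ∧ h ≤ p.2}).toReal

/-- `σ(λ,h) = sqrt(μ(λ,h)(1-μ(λ,h)))`. -/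
def sigma' (lam h : ℝ) : ℝ := Real.sqrt (mu lam h * (1 - mu lam h))

/-- The threshold `h_m = sqrt(2 r log m)`. -/
def hthr (r : ℝ) (m : ℕ) : ℝ := Real.sqrt (2 * r * Real.log m)

/-- `μ_m(λ) = μ(λ, h_m)`. -/
def muM (r : ℝ) (m : ℕ) (lam : ℝ) : ℝ := mu lam (hthr r m)

/-- `σ_m(λ) = σ(λ, h_m)`. -/
def sigM (r : ℝ) (m : ℕ) (lam : ℝ) : ℝ := sigma' lam (hthr r m)

/-- Canonical probability space carrying `m` i.i.d. random vectors in `ℝ^d`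
whose coordinates are i.i.d. standard normal: `a_i ω := ω i`. -/
def Prob (d m : ℕ) : Measure (Fin m → Fin d → ℝ) :=
  Measure.pi fun _ => Measure.pi fun _ : Fin d => gaussianReal 0 1

/-- Euclidean inner product on `ℝ^d`. -/
def dotp {d : ℕ} (a x : Fin d → ℝ) : ℝ := ∑ j, a j * x j

/-- `x` lies on the unit sphere `S^{d-1}`. -/
def unitVec {d : ℕ} (x : Fin d → ℝ) : Prop := ∑ j, x j ^ 2 = 1

/-- The score `S_m(x,y) = (1/m) ∑_i 1[⟨a_i,x⟩ ≥ h_m]·1[⟨a_i,y⟩ ≥ h_m]`. -/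
def score (d m : ℕ) (r : ℝ) (x y : Fin d → ℝ) (ω : Fin m → Fin d → ℝ) : ℝ :=
  (1 / (m : ℝ)) * ∑ i, (if hthr r m ≤ dotp (ω i) x then (1 : ℝ) else 0) *
    (if hthr r m ≤ dotp (ω i) y then (1 : ℝ) else 0)

/-- The standard normal cumulative distribution function `Φ`. -/
def Phi (t : ℝ) : ℝ := (gaussianReal 0 1 (Set.Iic t)).toReal

/-- The standard normal upper tail `P(N(0,1) ≥ t)`. -/
def gaussTail (t : ℝ) : ℝ := (gaussianReal 0 1 {z : ℝ | t ≤ z}).toReal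

/-!
Both `(⟨a_i, x⟩, ⟨a_i, y⟩)` and the canonical pair `(w, v)` have one-dimensional projections
`N(0, s² + 2stλ + t²)`, so they have the same law, and a union bound over the `m` rows gives
`P(S_m ≠ 0) ≤ m μ_m(λ)`. If both coordinates are at least `h` then `w + v ≥ 2h`, and the Chernoff
bound for `w + v ∼ N(0, 2(1 + λ))` with parameter `t = h_m / (2r)` yields
`m μ_m(λ) ≤ m ^ ((1 + λ) / (2r) - 1)`, whose exponent is negative precisely when `λ < 2r - 1`.
This choice of `t` is not optimal, but it also covers the degenerate case `λ = -1`, for which the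
optimal one, `h_m / (1 + λ)`, does not exist.
-/

lemma map_sum_mul_pi_gaussianReal {ι : Type*} [Fintype ι] (c : ι → ℝ) :
    (Measure.pi fun _ : ι => gaussianReal 0 1).map (fun a => ∑ j, a j * c j) =
      gaussianReal 0 (∑ j, c j ^ 2).toNNReal := by
  have factor : (fun a : ι → ℝ => ∑ j, a j * c j) =
      innerSL ℝ (WithLp.toLp 2 c) ∘ WithLp.toLp 2 := by
    ext a
    simp [PiLp.inner_apply]
  rw [factor, ← Measure.map_map (by fun_prop) (by fun_prop), map_pi_eq_stdGaussian,
    IsGaussian.map_eq_gaussianReal, integral_strongDual_stdGaussian, variance_dual_stdGaussian,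
    innerSL_apply_norm, EuclideanSpace.real_norm_sq_eq]

lemma map_mul_add_mul_prod_gaussianReal (a b : ℝ) :
    ((gaussianReal 0 1).prod (gaussianReal 0 1)).map (fun z => a * z.1 + b * z.2) =
      gaussianReal 0 (a ^ 2 + b ^ 2).toNNReal := by
  rw [← (measurePreserving_finTwoArrow (gaussianReal 0 1)).map_eq,
    Measure.map_map (by fun_prop) (by fun_prop)]
  simpa [Function.comp_def, mul_comm] using map_sum_mul_pi_gaussianReal ![a, b]

lemma gaussianReal_real_Ici_le (μ : ℝ) (v : NNReal) (a : ℝ) {t : ℝ} (ht : 0 ≤ t) :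
    (gaussianReal μ v).real (Set.Ici a) ≤ Real.exp (-t * a + (μ * t + v * t ^ 2 / 2)) := by
  have chernoff := measure_ge_le_exp_mul_mgf (X := id) a ht
    (integrable_exp_mul_gaussianReal (μ := μ) (v := v) t)
  rwa [mgf_id_gaussianReal, ← Real.exp_add] at chernoff

lemma measure_ext_of_map_strongDual {E : Type*} [NormedAddCommGroup E] [NormedSpace ℝ E]
    [CompleteSpace E] [SecondCountableTopology E] [MeasurableSpace E] [BorelSpace E]
    {μ ν : Measure E} [IsFiniteMeasure μ] [IsFiniteMeasure ν]
    (h : ∀ L : StrongDual ℝ E, μ.map L = ν.map L) : μ = ν := by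
  refine Measure.ext_of_charFunDual (funext fun L => ?_)
  rw [charFunDual_eq_charFun_map_one, charFunDual_eq_charFun_map_one, h L]

lemma measure_ext_of_map_mul_add_mul {μ ν : Measure (ℝ × ℝ)} [IsFiniteMeasure μ]
    [IsFiniteMeasure ν]
    (h : ∀ s t : ℝ, μ.map (fun p => s * p.1 + t * p.2) = ν.map (fun p => s * p.1 + t * p.2)) :
    μ = ν := by
  refine measure_ext_of_map_strongDual fun L => ?_
  have hL : ⇑L = fun p => L (1, 0) * p.1 + L (0, 1) * p.2 := by
    ext p
    calc L p = L (p.1 • (1, 0) + p.2 • (0, 1)) := by simp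
      _ = L (1, 0) * p.1 + L (0, 1) * p.2 := by
        rw [map_add, map_smul, map_smul, smul_eq_mul, smul_eq_mul, mul_comm, mul_comm p.2]
  rw [hL]
  exact h _ _

instance isProbabilityMeasure_gaussPair (lam : ℝ) : IsProbabilityMeasure (gaussPair lam) :=
  Measure.isProbabilityMeasure_map (by fun_prop)

lemma gaussPair_map_mul_add_mul {lam : ℝ} (hlam : |lam| ≤ 1) (s t : ℝ) :
    (gaussPair lam).map (fun p => s * p.1 + t * p.2) =
      gaussianReal 0 (s ^ 2 + 2 * s * t * lam + t ^ 2).toNNReal := by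
  have hsq : √(1 - lam ^ 2) ^ 2 = 1 - lam ^ 2 :=
    Real.sq_sqrt (sub_nonneg.2 ((sq_le_one_iff_abs_le_one lam).2 hlam))
  have hvar : (s + t * lam) ^ 2 + (t * √(1 - lam ^ 2)) ^ 2 = s ^ 2 + 2 * s * t * lam + t ^ 2 := by
    rw [mul_pow t √_, hsq]
    ring
  rw [gaussPair, Measure.map_map (by fun_prop) (by fun_prop), ← hvar,
    ← map_mul_add_mul_prod_gaussianReal]
  congr 1
  ext z
  simp only [Function.comp_apply]
  ring

lemma mu_le_exp {lam : ℝ} (hlam : |lam| ≤ 1) (h : ℝ) {t : ℝ} (ht : 0 ≤ t) :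
    mu lam h ≤ Real.exp (-t * (2 * h) + (1 + lam) * t ^ 2) := by
  have hvar : 0 ≤ 2 * (1 + lam) := by linarith [(abs_le.1 hlam).1]
  have law_add : (gaussPair lam).map (fun p => p.1 + p.2) =
      gaussianReal 0 (2 * (1 + lam)).toNNReal := by
    convert gaussPair_map_mul_add_mul hlam 1 1 using 3 <;> ring
  calc mu lam h
      ≤ (gaussPair lam).real ((fun p => p.1 + p.2) ⁻¹' Set.Ici (2 * h)) :=
        measureReal_mono fun p ⟨hw, hv⟩ => by
          simp only [Set.mem_preimage, Set.mem_Ici]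
          linarith
    _ = (gaussianReal 0 (2 * (1 + lam)).toNNReal).real (Set.Ici (2 * h)) := by
        rw [← law_add, map_measureReal_apply (by fun_prop) measurableSet_Ici]
    _ ≤ Real.exp (-t * (2 * h) + (0 * t + (2 * (1 + lam)).toNNReal * t ^ 2 / 2)) :=
        gaussianReal_real_Ici_le _ _ _ ht
    _ = Real.exp (-t * (2 * h) + (1 + lam) * t ^ 2) := by
        rw [Real.coe_toNNReal _ hvar]
        ring_nf

section Asymptotics

variable {r lam : ℝ}

lemma natCast_mul_muM_le_rpow (hr : 0 < r) (hlam : |lam| ≤ 1) {m : ℕ} (hm : m ≠ 0) :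
    m * muM r m lam ≤ (m : ℝ) ^ ((1 + lam) / (2 * r) - 1) := by
  have hm_pos : (0 : ℝ) < m := by positivity
  have hthr_nonneg : 0 ≤ hthr r m := Real.sqrt_nonneg _
  have log_eq : Real.log m = hthr r m ^ 2 / (2 * r) := by
    rw [hthr, Real.sq_sqrt (by positivity)]
    field_simp
  have exponent : -(hthr r m / (2 * r)) * (2 * hthr r m) + (1 + lam) * (hthr r m / (2 * r)) ^ 2 =
      Real.log m * ((1 + lam) / (2 * r) - 2) := by
    rw [log_eq]
    field_simp
    ring
  calc m * muM r m lam
      ≤ m * Real.exp (Real.log m * ((1 + lam) / (2 * r) - 2)) := by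
        rw [← exponent]
        gcongr
        exact mu_le_exp hlam _ (by positivity)
    _ = (m : ℝ) ^ ((1 + lam) / (2 * r) - 1) := by
        rw [← Real.rpow_def_of_pos hm_pos, mul_comm, ← Real.rpow_add_one hm_pos.ne']
        ring_nf

lemma tendsto_natCast_mul_muM (hlam : |lam| ≤ 1) (hsub : lam < 2 * r - 1) :
    Tendsto (fun m : ℕ => (m : ℝ) * muM r m lam) atTop (𝓝 0) := by
  have hr : 0 < r := by linarith [(abs_le.1 hlam).1]
  have hexp : 0 < 1 - (1 + lam) / (2 * r) := by
    rw [sub_pos, div_lt_one (by positivity)]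
    linarith
  have hpow : Tendsto (fun m : ℕ => (m : ℝ) ^ ((1 + lam) / (2 * r) - 1)) atTop (𝓝 0) := by
    simpa only [neg_sub, Function.comp_def] using
      (tendsto_rpow_neg_atTop hexp).comp tendsto_natCast_atTop_atTop
  refine squeeze_zero'
    (Eventually.of_forall fun m => mul_nonneg m.cast_nonneg measureReal_nonneg) ?_ hpow
  filter_upwards [eventually_ne_atTop 0] with m hm
  exact natCast_mul_muM_le_rpow hr hlam hm

end Asymptotics

lemma measureReal_pi_exists_mem_le {ι : Type*} [Fintype ι] {α : ι → Type*}
    [∀ i, MeasurableSpace (α i)] (ν : ∀ i, Measure (α i)) [∀ i, IsProbabilityMeasure (ν i)]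
    {A : ∀ i, Set (α i)} (hA : ∀ i, NullMeasurableSet (A i) (ν i)) :
    (Measure.pi ν).real {ω | ∃ i, ω i ∈ A i} ≤ ∑ i, (ν i).real (A i) :=
  calc (Measure.pi ν).real {ω | ∃ i, ω i ∈ A i}
      = (Measure.pi ν).real (⋃ i, Function.eval i ⁻¹' A i) := by
        congr 1
        ext ω
        simp
    _ ≤ ∑ i, (Measure.pi ν).real (Function.eval i ⁻¹' A i) := measureReal_iUnion_fintype_le _
    _ = ∑ i, (ν i).real (A i) :=
        Finset.sum_congr rfl fun i _ => (measurePreserving_eval ν i).measureReal_preimage (hA i)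

section Score

variable {d : ℕ} {x y : Fin d → ℝ}

lemma abs_dotp_le_one (hx : unitVec x) (hy : unitVec y) : |dotp x y| ≤ 1 := by
  rw [← sq_le_one_iff_abs_le_one]
  calc dotp x y ^ 2 ≤ (∑ j, x j ^ 2) * ∑ j, y j ^ 2 := Finset.sum_mul_sq_le_sq_mul_sq _ x y
    _ = 1 := by rw [hx, hy, one_mul]

@[fun_prop]
lemma measurable_dotp (x : Fin d → ℝ) : Measurable fun a : Fin d → ℝ => dotp a x := by
  unfold dotp
  fun_prop

lemma map_dotp_prodMk_dotp_eq_gaussPair (hx : unitVec x) (hy : unitVec y) :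
    (Measure.pi fun _ : Fin d => gaussianReal 0 1).map (fun a => (dotp a x, dotp a y)) =
      gaussPair (dotp x y) := by
  have := Measure.isProbabilityMeasure_map (μ := Measure.pi fun _ : Fin d => gaussianReal 0 1)
    (f := fun a => (dotp a x, dotp a y)) (by fun_prop)
  refine measure_ext_of_map_mul_add_mul fun s t => ?_
  have projection : (fun p : ℝ × ℝ => s * p.1 + t * p.2) ∘ (fun a => (dotp a x, dotp a y)) =
      fun a => ∑ j, a j * (s * x j + t * y j) := by
    ext a
    simp only [Function.comp_apply, dotp, Finset.mul_sum, ← Finset.sum_add_distrib]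
    exact Finset.sum_congr rfl fun j _ => by ring
  have variance : ∑ j, (s * x j + t * y j) ^ 2 = s ^ 2 + 2 * s * t * dotp x y + t ^ 2 :=
    calc ∑ j, (s * x j + t * y j) ^ 2
        = s ^ 2 * ∑ j, x j ^ 2 + 2 * s * t * dotp x y + t ^ 2 * ∑ j, y j ^ 2 := by
          simp only [dotp, Finset.mul_sum, ← Finset.sum_add_distrib]
          exact Finset.sum_congr rfl fun j _ => by ring
      _ = s ^ 2 + 2 * s * t * dotp x y + t ^ 2 := by rw [hx, hy, mul_one, mul_one]
  rw [Measure.map_map (by fun_prop) (by fun_prop), projection, map_sum_mul_pi_gaussianReal,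
    variance, gaussPair_map_mul_add_mul (abs_dotp_le_one hx hy)]

lemma measureReal_le_dotp_and_le_dotp_eq_mu (hx : unitVec x) (hy : unitVec y) (h : ℝ) :
    (Measure.pi fun _ : Fin d => gaussianReal 0 1).real {a | h ≤ dotp a x ∧ h ≤ dotp a y} =
      mu (dotp x y) h := by
  have quadrant : MeasurableSet {p : ℝ × ℝ | h ≤ p.1 ∧ h ≤ p.2} := measurableSet_Ici (a := (h, h))
  rw [mu, ← map_dotp_prodMk_dotp_eq_gaussPair hx hy, ← measureReal_def,
    map_measureReal_apply (by fun_prop) quadrant, Set.preimage_ofPred_eq]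

instance isProbabilityMeasure_Prob (d m : ℕ) : IsProbabilityMeasure (Prob d m) :=
  inferInstanceAs (IsProbabilityMeasure (Measure.pi _))

lemma exists_le_dotp_of_score_ne_zero {m : ℕ} {r : ℝ} {ω : Fin m → Fin d → ℝ}
    (hω : score d m r x y ω ≠ 0) :
    ∃ i, hthr r m ≤ dotp (ω i) x ∧ hthr r m ≤ dotp (ω i) y := by
  obtain ⟨i, -, hi⟩ := Finset.exists_ne_zero_of_sum_ne_zero (right_ne_zero_of_mul hω)
  exact ⟨i, by simpa [and_comm] using hi⟩

lemma prob_score_ne_zero_le (hx : unitVec x) (hy : unitVec y) (r : ℝ) (m : ℕ) :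
    (Prob d m).real {ω | score d m r x y ω ≠ 0} ≤ m * muM r m (dotp x y) := by
  let A : Set (Fin d → ℝ) := {a | hthr r m ≤ dotp a x ∧ hthr r m ≤ dotp a y}
  have hA : MeasurableSet A :=
    (measurableSet_le measurable_const (measurable_dotp x)).inter
      (measurableSet_le measurable_const (measurable_dotp y))
  calc (Prob d m).real {ω | score d m r x y ω ≠ 0}
      ≤ (Prob d m).real {ω | ∃ i, ω i ∈ A} :=
        measureReal_mono fun _ => exists_le_dotp_of_score_ne_zero
    _ ≤ m * (Measure.pi fun _ : Fin d => gaussianReal 0 1).real A := by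
        simpa [Prob] using measureReal_pi_exists_mem_le
          (fun _ : Fin m => Measure.pi fun _ : Fin d => gaussianReal 0 1)
          fun _ => hA.nullMeasurableSet
    _ = m * muM r m (dotp x y) := by rw [measureReal_le_dotp_and_le_dotp_eq_mu hx hy, muM]

end Score

theorem stmt0_general {d : ℕ} (r lam : ℝ) (hlam : lam < 2 * r - 1)
    (x y : Fin d → ℝ) (hx : unitVec x) (hy : unitVec y) (hxy : dotp x y = lam) :
    (∀ m : ℕ, ((Prob d m) {ω | score d m r x y ω ≠ 0}).toReal ≤ (m : ℝ) * muM r m lam) ∧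
    Tendsto (fun m : ℕ => (m : ℝ) * muM r m lam) atTop (nhds 0) ∧
    Tendsto (fun m : ℕ => ((Prob d m) {ω | score d m r x y ω ≠ 0}).toReal) atTop (nhds 0) := by
  subst hxy
  have bound := prob_score_ne_zero_le hx hy r
  have limit := tendsto_natCast_mul_muM (abs_dotp_le_one hx hy) hlam
  exact ⟨bound, limit, squeeze_zero (fun _ => measureReal_nonneg) bound limit⟩

/-- Case 1 of Lemma 1 (Gaussian score, subcritical regime). -/
theorem stmt0 {d : ℕ} (hd : 1 ≤ d) (r : ℝ) (hr : r ∈ Set.Ioo (0 : ℝ) 1)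
    (lam : ℝ) (hlam1 : -1 ≤ lam) (hlam2 : lam < 2 * r - 1) (hcrit : -1 < 2 * r - 1)
    (x y : Fin d → ℝ) (hx : unitVec x) (hy : unitVec y) (hxy : dotp x y = lam) :
    (∀ m : ℕ, ((Prob d m) {ω | score d m r x y ω ≠ 0}).toReal ≤ (m : ℝ) * muM r m lam) ∧
    Tendsto (fun m : ℕ => (m : ℝ) * muM r m lam) atTop (nhds 0) ∧
    Tendsto (fun m : ℕ => ((Prob d m) {ω | score d m r x y ω ≠ 0}).toReal) atTop (nhds 0) :=
  stmt0_general r lam hlam2 x y hx hy hxy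

end
end

section
/- Fix r ∈ (0,1) and λ ∈ (2r-1, 1). Let d ≥ 1 and let x, y be unit vectors in ℝ^d with ⟨x,y⟩ = λ. Define the normalized score S̃_m(x,y) := √m·(S_m(x,y) - μ_m(λ))/σ_m(λ). Then S̃_m(x,y) converges in distribution to a standard normal random variable as m → ∞; that is, for every t ∈ ℝ, P(S̃_m(x,y) < t) → Φ(t). -/
open MeasureTheory ProbabilityTheory Filter Topology

noncomputable section

/-!
By rotation invariance `μ_m(λ)` is the probability that a standard Gaussian vector has inner product
at least `h_m` with both `x` and `y`, so the normalized score is the standardized number of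
successes in `m` independent trials of success probability `μ_m(λ)`. The central limit theorem holds
for such a triangular array as soon as the variance `m μ_m(λ) (1 - μ_m(λ))` of the count tends to
infinity: the standardized summands are then uniformly small, and their characteristic functions are
`1 - t² / (2m) + o(1 / m)`. Since `1 - μ_m(λ) ≥ 1 / 2`, this amounts to `m μ_m(λ) → ∞`. The point of
the joint tail nearest to the origin is at distance `√(2 / (1 + λ)) h_m`, which makes `μ_m(λ)` of
order `m ^ (-2 r / (1 + λ))` up to factors `m ^ o(1)`, and the exponent is above `-1` exactly when
`λ > 2 r - 1`.
-/

section TriangularCLT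

lemma norm_exp_mul_I_sub_quadratic_le (u : ℝ) :
    ‖Complex.exp (u * Complex.I) - (1 + u * Complex.I - u ^ 2 / 2)‖ ≤ |u| ^ 3 * Real.exp |u| := by
  have taylor : ∑ k ∈ Finset.range 3, ((u : ℂ) * Complex.I) ^ k / (k.factorial : ℂ)
      = 1 + u * Complex.I - u ^ 2 / 2 := by
    simp [Finset.sum_range_succ, Nat.factorial, mul_pow]
    ring
  simpa [taylor] using Complex.norm_exp_sub_sum_le_norm_mul_exp (u * Complex.I) 3

lemma integrable_quadratic {ν : Measure ℝ} [IsFiniteMeasure ν] (h : MemLp id 2 ν) (a c : ℂ) :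
    Integrable (fun x : ℝ ↦ 1 + a * x + c * (x : ℂ) ^ 2) ν := by
  have hint : Integrable (fun x : ℝ ↦ x) ν := h.integrable one_le_two
  refine ((integrable_const _).add (hint.ofReal.const_mul a)).add ?_
  exact_mod_cast (h.integrable_sq.ofReal (𝕜 := ℂ)).const_mul c

lemma integral_quadratic_of_integral_eq_zero {ν : Measure ℝ} [IsProbabilityMeasure ν]
    (h : MemLp id 2 ν) (hmean : ν[id] = 0) (a c : ℂ) :
    ∫ x, (1 + a * x + c * (x : ℂ) ^ 2) ∂ν = 1 + c * Var[id; ν] := by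
  have hint : Integrable (fun x : ℝ ↦ x) ν := h.integrable one_le_two
  have hint_sq : Integrable (fun x : ℝ ↦ x ^ 2) ν := h.integrable_sq
  have hzero : ∫ x : ℝ, x ∂ν = 0 := hmean
  have hvar : Var[id; ν] = ∫ x, x ^ 2 ∂ν := variance_of_integral_eq_zero aemeasurable_id hmean
  simp_rw [← Complex.ofReal_pow]
  have hint_lin : Integrable (fun x : ℝ ↦ a * (x : ℂ)) ν := hint.ofReal.const_mul a
  have hint_quad : Integrable (fun x : ℝ ↦ c * ((x ^ 2 : ℝ) : ℂ)) ν := hint_sq.ofReal.const_mul c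
  have hint_affine : Integrable (fun x : ℝ ↦ 1 + a * (x : ℂ)) ν :=
    (integrable_const 1).add hint_lin
  rw [integral_add hint_affine hint_quad, integral_add (integrable_const _) hint_lin,
    integral_const_mul, integral_const_mul, integral_complex_ofReal, integral_complex_ofReal,
    hzero, hvar]
  simp

lemma norm_charFun_sub_quadratic_le {ν : Measure ℝ} [IsProbabilityMeasure ν] {b : ℝ}
    (hmean : ν[id] = 0) (hb : ∀ᵐ x ∂ν, |x| ≤ b) (t : ℝ) :
    ‖charFun ν t - (1 - t ^ 2 * Var[id; ν] / 2 : ℝ)‖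
      ≤ |t| ^ 3 * Real.exp (|t| * b) * b * Var[id; ν] := by
  have hLp : MemLp id 2 ν := .of_bound aestronglyMeasurable_id b hb
  have hint_exp : Integrable (fun x : ℝ ↦ Complex.exp (t * x * Complex.I)) ν :=
    .of_bound (by fun_prop) 1 (.of_forall fun x ↦ by
      exact_mod_cast (Complex.norm_exp_ofReal_mul_I (t * x)).le)
  have hquad : ((1 - t ^ 2 * Var[id; ν] / 2 : ℝ) : ℂ) =
      ∫ x, (1 + t * Complex.I * x + -(t ^ 2 / 2) * (x : ℂ) ^ 2) ∂ν := by
    rw [integral_quadratic_of_integral_eq_zero hLp hmean]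
    push_cast
    ring
  rw [charFun_apply_real, hquad, ← integral_sub hint_exp (integrable_quadratic hLp _ _),
    variance_of_integral_eq_zero aemeasurable_id hmean, ← integral_const_mul]
  refine norm_integral_le_of_norm_le (hLp.integrable_sq.const_mul _) ?_
  filter_upwards [hb] with x hx
  calc
    _ = ‖Complex.exp ((t * x : ℝ) * Complex.I)
          - (1 + (t * x : ℝ) * Complex.I - (t * x : ℝ) ^ 2 / 2)‖ := by
      simp only [Complex.ofReal_mul]
      ring_nf
    _ ≤ |t * x| ^ 3 * Real.exp |t * x| := norm_exp_mul_I_sub_quadratic_le _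
    _ = |t| ^ 3 * Real.exp (|t| * |x|) * |x| * x ^ 2 := by
      rw [abs_mul, ← sq_abs x]; ring
    _ ≤ |t| ^ 3 * Real.exp (|t| * b) * b * x ^ 2 := by gcongr

lemma tendsto_charFun_pow {ν : ℕ → Measure ℝ} [∀ m, IsProbabilityMeasure (ν m)] {b : ℕ → ℝ}
    {v : ℝ} (hmean : ∀ m, (ν m)[id] = 0) (hbound : ∀ m, ∀ᵐ x ∂ν m, |x| ≤ b m)
    (hb : Tendsto b atTop (𝓝 0)) (hvar : Tendsto (fun m ↦ m * Var[id; ν m]) atTop (𝓝 v)) (t : ℝ) :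
    Tendsto (fun m ↦ charFun (ν m) t ^ m) atTop (𝓝 (Complex.exp (-(v * t ^ 2 / 2)))) := by
  have hrem : Tendsto (fun m : ℕ ↦
      m * (charFun (ν m) t - (1 - t ^ 2 * Var[id; ν m] / 2 : ℝ))) atTop (𝓝 0) := by
    have hbig : Tendsto (fun m : ℕ ↦ |t| ^ 3 * Real.exp (|t| * b m) * b m * (m * Var[id; ν m]))
        atTop (𝓝 0) := by
      have hexp : Tendsto (fun m ↦ Real.exp (|t| * b m)) atTop (𝓝 (Real.exp (|t| * 0))) :=
        (hb.const_mul _).rexp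
      simpa using ((hexp.const_mul (|t| ^ 3)).mul hb).mul hvar
    refine squeeze_zero_norm (fun m ↦ ?_) hbig
    rw [norm_mul, Complex.norm_natCast, mul_left_comm]
    gcongr
    exact norm_charFun_sub_quadratic_le (hmean m) (hbound m) t
  have hmain : Tendsto (fun m : ℕ ↦ ((-(m * Var[id; ν m] * t ^ 2 / 2) : ℝ) : ℂ)) atTop
      (𝓝 (-(v * t ^ 2 / 2) : ℝ)) :=
    (Complex.continuous_ofReal.tendsto _).comp ((hvar.mul_const _).div_const _).neg
  have hlim : Tendsto (fun m : ℕ ↦ m * (charFun (ν m) t - 1)) atTop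
      (𝓝 (-(v * t ^ 2 / 2))) := by
    convert hrem.add hmain using 2 with m
    · push_cast; ring
    · push_cast; ring
  simpa using Complex.tendsto_one_add_pow_exp_of_tendsto hlim

section StandardizedIndicator

variable {Ω : Type*} [MeasurableSpace Ω] {P : Measure Ω} {E : Set Ω}

/-- The indicator of the event `E`, centered at its mean and scaled so that the sum of `n`
independent copies has variance one; it vanishes identically when that sum is degenerate. -/
def standardizedIndicator (P : Measure Ω) (E : Set Ω) (n : ℕ) (ω : Ω) : ℝ :=
  (E.indicator 1 ω - P.real E) / √(n * (P.real E * (1 - P.real E)))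

lemma measurable_standardizedIndicator (hE : MeasurableSet E) (n : ℕ) :
    Measurable (standardizedIndicator P E n) :=
  ((measurable_one.indicator hE).sub_const _).div_const _

lemma integral_standardizedIndicator [IsProbabilityMeasure P] (hE : MeasurableSet E) (n : ℕ) :
    P[standardizedIndicator P E n] = 0 := by
  have hint : Integrable (E.indicator (1 : Ω → ℝ)) P := (integrable_const (1 : ℝ)).indicator hE
  simp only [standardizedIndicator]
  rw [integral_div, integral_sub hint (integrable_const _), integral_indicator_one hE]
  simp

lemma abs_standardizedIndicator_le [IsProbabilityMeasure P] (n : ℕ) (ω : Ω) :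
    |standardizedIndicator P E n ω| ≤ (√(n * (P.real E * (1 - P.real E))))⁻¹ := by
  have hp0 : 0 ≤ P.real E := measureReal_nonneg
  have hp1 : P.real E ≤ 1 := measureReal_le_one
  have hcentered : |E.indicator 1 ω - P.real E| ≤ 1 := by
    by_cases hω : ω ∈ E <;> simp only [hω, Set.indicator_of_mem, Set.indicator_of_notMem,
      not_false_eq_true, Pi.one_apply, abs_le] <;> constructor <;> linarith
  rw [standardizedIndicator, abs_div, abs_of_nonneg (Real.sqrt_nonneg _), ← one_div]
  gcongr

lemma variance_indicator_one [IsProbabilityMeasure P] (hE : MeasurableSet E) :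
    Var[E.indicator 1; P] = P.real E * (1 - P.real E) := by
  have hsq : E.indicator (1 : Ω → ℝ) ^ 2 = E.indicator 1 := by
    ext ω
    by_cases hω : ω ∈ E <;> simp [hω]
  have hLp : MemLp (E.indicator (1 : Ω → ℝ)) 2 P := (memLp_const (1 : ℝ)).indicator hE
  rw [variance_eq_sub hLp, hsq, integral_indicator_one hE]
  ring

lemma variance_standardizedIndicator [IsProbabilityMeasure P] (hE : MeasurableSet E) {n : ℕ}
    (hn : 0 < n * (P.real E * (1 - P.real E))) :
    n * Var[standardizedIndicator P E n; P] = 1 := by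
  have hind : AEStronglyMeasurable (E.indicator (1 : Ω → ℝ)) P :=
    (measurable_one.indicator hE).aestronglyMeasurable
  have hvar : Var[standardizedIndicator P E n; P]
      = P.real E * (1 - P.real E) * ((√(n * (P.real E * (1 - P.real E))))⁻¹) ^ 2 := by
    rw [← variance_indicator_one hE, ← variance_sub_const hind (P.real E), ← variance_mul_const,
      variance_sub_const hind, variance_indicator_one hE]
    rfl
  rw [hvar, inv_pow, Real.sq_sqrt hn.le, ← mul_assoc, mul_inv_cancel₀ hn.ne']

end StandardizedIndicator

variable {Ω : ℕ → Type*} [∀ m, MeasurableSpace (Ω m)] {P : ∀ m, Measure (Ω m)}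
  [∀ m, IsProbabilityMeasure (P m)]

theorem tendstoInDistribution_sum_of_bounded {X : ∀ m, Fin m → Ω m → ℝ} {ν : ℕ → Measure ℝ}
    [∀ m, IsProbabilityMeasure (ν m)] {b : ℕ → ℝ} {v : NNReal}
    (hindep : ∀ m, iIndepFun (X m) (P m)) (hlaw : ∀ m i, HasLaw (X m i) (ν m) (P m))
    (hmean : ∀ m, (ν m)[id] = 0) (hbound : ∀ m, ∀ᵐ x ∂ν m, |x| ≤ b m)
    (hb : Tendsto b atTop (𝓝 0)) (hvar : Tendsto (fun m ↦ m * Var[id; ν m]) atTop (𝓝 v)) :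
    TendstoInDistribution (fun m ω ↦ ∑ i, X m i ω) atTop id P (gaussianReal 0 v) where
  forall_aemeasurable m := Finset.aemeasurable_fun_sum _ fun i _ ↦ (hlaw m i).aemeasurable
  tendsto := by
    refine ProbabilityMeasure.tendsto_iff_tendsto_charFun.2 fun t ↦ ?_
    have hcharFun (m : ℕ) : charFun ((P m).map fun ω ↦ ∑ i, X m i ω) t = charFun (ν m) t ^ m := by
      simp [(hindep m).charFun_map_fun_sum_eq_prod fun i ↦ (hlaw m i).aemeasurable,
        (hlaw m _).map_eq]
    simpa [hcharFun, charFun_gaussianReal] using tendsto_charFun_pow hmean hbound hb hvar t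

theorem tendstoInDistribution_sum_standardizedIndicator {E : ∀ m, Set (Ω m)}
    (hE : ∀ m, MeasurableSet (E m))
    (hvar : Tendsto (fun m ↦ m * ((P m).real (E m) * (1 - (P m).real (E m)))) atTop atTop) :
    TendstoInDistribution (fun m ω ↦ ∑ i : Fin m, standardizedIndicator (P m) (E m) m (ω i))
      atTop id (fun m ↦ Measure.pi fun _ ↦ P m) (gaussianReal 0 1) := by
  let Y (m : ℕ) : Ω m → ℝ := standardizedIndicator (P m) (E m) m
  have hY (m) : Measurable (Y m) := measurable_standardizedIndicator (hE m) m
  have hprob (m) : IsProbabilityMeasure ((P m).map (Y m)) :=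
    Measure.isProbabilityMeasure_map (hY m).aemeasurable
  have hlaw (m) (i : Fin m) :
      HasLaw (fun ω ↦ Y m (ω i)) ((P m).map (Y m)) (Measure.pi fun _ ↦ P m) :=
    HasLaw.comp ⟨(hY m).aemeasurable, rfl⟩
      (measurePreserving_eval (fun _ ↦ P m) i).hasLaw
  have hmean (m) : ((P m).map (Y m))[id] = 0 := by
    rw [integral_map (hY m).aemeasurable aestronglyMeasurable_id]
    exact integral_standardizedIndicator (hE m) m
  have hbound (m) : ∀ᵐ x ∂(P m).map (Y m),
      |x| ≤ (√(m * ((P m).real (E m) * (1 - (P m).real (E m)))))⁻¹ :=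
    (ae_map_iff (hY m).aemeasurable (measurableSet_le measurable_norm measurable_const)).2
      (.of_forall fun ω ↦ abs_standardizedIndicator_le m ω)
  have hscale : Tendsto (fun m ↦ (√(m * ((P m).real (E m) * (1 - (P m).real (E m)))))⁻¹)
      atTop (𝓝 0) :=
    (Real.tendsto_sqrt_atTop.comp hvar).inv_tendsto_atTop
  have hvar_one : Tendsto (fun m ↦ m * Var[id; (P m).map (Y m)]) atTop (𝓝 (1 : NNReal)) := by
    refine tendsto_const_nhds.congr' ?_
    filter_upwards [hvar.eventually_gt_atTop 0] with m hm
    rw [variance_id_map (hY m).aemeasurable, variance_standardizedIndicator (hE m) hm,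
      NNReal.coe_one]
  have hindep (m) : iIndepFun (fun (i : Fin m) ω ↦ Y m (ω i)) (Measure.pi fun _ ↦ P m) :=
    iIndepFun_pi fun _ ↦ (hY m).aemeasurable
  exact tendstoInDistribution_sum_of_bounded hindep hlaw hmean hbound hscale hvar_one

end TriangularCLT

lemma tendsto_measureReal_lt_of_tendstoInDistribution {ι : Type*} {l : Filter ι}
    {Ω : ι → Type*} {Ω' : Type*}
    [∀ i, MeasurableSpace (Ω i)] [MeasurableSpace Ω'] {P : ∀ i, Measure (Ω i)}
    [∀ i, IsProbabilityMeasure (P i)] {P' : Measure Ω'} [IsProbabilityMeasure P']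
    {X : ∀ i, Ω i → ℝ} {Z : Ω' → ℝ} (h : TendstoInDistribution X l Z P P') {t : ℝ}
    (ht : P' {ω | Z ω = t} = 0) :
    Tendsto (fun i ↦ (P i).real {ω | X i ω < t}) l (𝓝 (P'.real {ω | Z ω < t})) := by
  have hfrontier : P'.map Z (frontier (Set.Iio t)) = 0 := by
    rw [frontier_Iio, Measure.map_apply_of_aemeasurable h.aemeasurable_limit
      (measurableSet_singleton t)]
    exact ht
  have hmap := ProbabilityMeasure.tendsto_measure_of_null_frontier_of_tendsto' h.tendsto hfrontier
  simp only [ProbabilityMeasure.coe_mk,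
    Measure.map_apply_of_aemeasurable (h.forall_aemeasurable _) measurableSet_Iio,
    Measure.map_apply_of_aemeasurable h.aemeasurable_limit measurableSet_Iio] at hmap
  exact (ENNReal.tendsto_toReal (measure_ne_top _ _)).comp hmap

section GaussianVectors

variable {ι κ : Type*} [Fintype ι] [Fintype κ]

/-- The law of a vector with independent standard normal coordinates indexed by `ι`. -/
abbrev gaussVec (ι : Type*) [Fintype ι] : Measure (ι → ℝ) :=
  Measure.pi fun _ ↦ gaussianReal 0 1

lemma integral_exp_dotProduct_mul_I_gaussVec (c : ι → ℝ) :
    ∫ a, Complex.exp ((a ⬝ᵥ c : ℝ) * Complex.I) ∂gaussVec ι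
      = Complex.exp (-(c ⬝ᵥ c : ℝ) / 2) := by
  have hprod (a : ι → ℝ) : Complex.exp ((a ⬝ᵥ c : ℝ) * Complex.I)
      = ∏ i, Complex.exp (c i * a i * Complex.I) := by
    rw [← Complex.exp_sum, ← Finset.sum_mul]
    simp [dotProduct, mul_comm]
  simp_rw [hprod]
  rw [integral_fintype_prod_eq_prod fun i (z : ℝ) ↦ Complex.exp (c i * z * Complex.I)]
  simp_rw [← charFun_apply_real, charFun_gaussianReal, ← Complex.exp_sum]
  simp [dotProduct, Finset.sum_div, pow_two, neg_div]

lemma measurable_dotProduct_pair (x y : ι → ℝ) :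
    Measurable fun a : ι → ℝ ↦ (a ⬝ᵥ x, a ⬝ᵥ y) := by
  simp only [dotProduct]
  fun_prop

lemma charFunDual_map_dotProduct_pair_gaussVec (x y : ι → ℝ) (L : StrongDual ℝ (ℝ × ℝ)) :
    charFunDual ((gaussVec ι).map fun a ↦ (a ⬝ᵥ x, a ⬝ᵥ y)) L =
      Complex.exp (-(L (1, 0) ^ 2 * (x ⬝ᵥ x) + 2 * (L (1, 0) * L (0, 1)) * (x ⬝ᵥ y)
        + L (0, 1) ^ 2 * (y ⬝ᵥ y) : ℝ) / 2) := by
  have hL (a : ι → ℝ) : L (a ⬝ᵥ x, a ⬝ᵥ y) = a ⬝ᵥ (L (1, 0) • x + L (0, 1) • y) := by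
    have hsplit : (a ⬝ᵥ x, a ⬝ᵥ y) = (a ⬝ᵥ x) • ((1, 0) : ℝ × ℝ) + (a ⬝ᵥ y) • (0, 1) := by simp
    rw [hsplit, map_add, map_smul, map_smul, dotProduct_add, dotProduct_smul, dotProduct_smul]
    simp only [smul_eq_mul, mul_comm]
  rw [charFunDual_apply, integral_map (measurable_dotProduct_pair x y).aemeasurable (by fun_prop)]
  simp_rw [hL]
  rw [integral_exp_dotProduct_mul_I_gaussVec]
  simp only [add_dotProduct, dotProduct_add, smul_dotProduct, dotProduct_smul, smul_eq_mul,
    dotProduct_comm y x]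
  ring_nf

lemma map_dotProduct_pair_gaussVec_congr {x y : ι → ℝ} {x' y' : κ → ℝ}
    (hxx : x ⬝ᵥ x = x' ⬝ᵥ x') (hxy : x ⬝ᵥ y = x' ⬝ᵥ y') (hyy : y ⬝ᵥ y = y' ⬝ᵥ y') :
    (gaussVec ι).map (fun a ↦ (a ⬝ᵥ x, a ⬝ᵥ y)) =
      (gaussVec κ).map (fun a ↦ (a ⬝ᵥ x', a ⬝ᵥ y')) := by
  have := Measure.isProbabilityMeasure_map (μ := gaussVec ι)
    (measurable_dotProduct_pair x y).aemeasurable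
  have := Measure.isProbabilityMeasure_map (μ := gaussVec κ)
    (measurable_dotProduct_pair x' y').aemeasurable
  refine Measure.ext_of_charFunDual (funext fun L ↦ ?_)
  simp_rw [charFunDual_map_dotProduct_pair_gaussVec, hxx, hxy, hyy]

lemma abs_dotProduct_le_one {x y : ι → ℝ} (hx : x ⬝ᵥ x = 1) (hy : y ⬝ᵥ y = 1) :
    |x ⬝ᵥ y| ≤ 1 := by
  have hcs : (x ⬝ᵥ y) ^ 2 ≤ x ⬝ᵥ x * y ⬝ᵥ y := by
    simpa only [dotProduct, pow_two] using Finset.sum_mul_sq_le_sq_mul_sq Finset.univ x y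
  rwa [hx, hy, one_mul, sq_le_one_iff_abs_le_one] at hcs

lemma gaussPair_eq_map_gaussVec_fin_two (lam : ℝ) :
    gaussPair lam = (gaussVec (Fin 2)).map
      fun a ↦ (a ⬝ᵥ ![1, 0], a ⬝ᵥ ![lam, √(1 - lam ^ 2)]) := by
  rw [gaussPair, ← (measurePreserving_finTwoArrow (gaussianReal 0 1)).map_eq,
    Measure.map_map (by fun_prop) (MeasurableEquiv.measurable _)]
  congr 1
  ext a <;> simp [dotProduct, MeasurableEquiv.finTwoArrow, mul_comm]

lemma gaussPair_dotProduct {x y : ι → ℝ} (hx : x ⬝ᵥ x = 1) (hy : y ⬝ᵥ y = 1) :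
    gaussPair (x ⬝ᵥ y) = (gaussVec ι).map fun a ↦ (a ⬝ᵥ x, a ⬝ᵥ y) := by
  rw [gaussPair_eq_map_gaussVec_fin_two]
  apply map_dotProduct_pair_gaussVec_congr
  · simp [hx]
  · simp
  · rw [hy, Matrix.vec2_dotProduct', Real.mul_self_sqrt
      (sub_nonneg.2 ((sq_le_one_iff_abs_le_one _).2 (abs_dotProduct_le_one hx hy)))]
    ring

/-- The intersection of the two half-spaces at height `h` in the directions `x` and `y`, i.e. the
event that a vector contributes to the score of `x` and `y`. -/
def jointHalfspace (h : ℝ) (x y : ι → ℝ) : Set (ι → ℝ) :=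
  {a | h ≤ a ⬝ᵥ x ∧ h ≤ a ⬝ᵥ y}

lemma measurableSet_Ici_prod (h : ℝ) : MeasurableSet {p : ℝ × ℝ | h ≤ p.1 ∧ h ≤ p.2} :=
  (measurableSet_le measurable_const measurable_fst).inter
    (measurableSet_le measurable_const measurable_snd)

lemma measurableSet_jointHalfspace (h : ℝ) (x y : ι → ℝ) :
    MeasurableSet (jointHalfspace h x y) :=
  measurable_dotProduct_pair x y (measurableSet_Ici_prod h)

lemma mu_dotProduct {x y : ι → ℝ} (hx : x ⬝ᵥ x = 1) (hy : y ⬝ᵥ y = 1) (h : ℝ) :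
    mu (x ⬝ᵥ y) h = (gaussVec ι).real (jointHalfspace h x y) := by
  rw [mu, gaussPair_dotProduct hx hy,
    Measure.map_apply (measurable_dotProduct_pair x y) (measurableSet_Ici_prod h)]
  rfl

end GaussianVectors

section JointTail

lemma mul_gaussianPDFReal_le_measureReal_Icc {μ a b : ℝ} {v : NNReal} (hv : v ≠ 0) (ha : μ ≤ a)
    (hab : a ≤ b) :
    (b - a) * gaussianPDFReal μ v b ≤ (gaussianReal μ v).real (Set.Icc a b) := by
  rw [measureReal_def, gaussianReal_apply_eq_integral _ hv,
    ENNReal.toReal_ofReal (integral_nonneg fun z ↦ gaussianPDFReal_nonneg _ _ _)]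
  have hconst : ∫ _ in Set.Icc a b, gaussianPDFReal μ v b = (b - a) * gaussianPDFReal μ v b := by
    simp [hab]
  rw [← hconst]
  refine setIntegral_mono_on (by simp) (integrable_gaussianPDFReal μ v).integrableOn
    measurableSet_Icc fun z hz ↦ ?_
  simp only [gaussianPDFReal]
  gcongr
  · exact sub_nonneg.2 (ha.trans hz.1)
  · exact hz.2

-- In the coordinates along `x + y` and `x - y` the event contains a unit square.
lemma gaussianPDFReal_mul_le_mu {lam h : ℝ} (hlam : -1 < lam) (hlam' : lam ≤ 1) (hh : 0 ≤ h) :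
    gaussianPDFReal 0 1 ((h + 1) / √((1 + lam) / 2) + 1) * gaussianPDFReal 0 1 1 ≤ mu lam h := by
  set α := √((1 + lam) / 2)
  set β := √((1 - lam) / 2)
  set T := (h + 1) / α
  have hα : 0 < α := Real.sqrt_pos.2 (by linarith)
  have hαsq : α * α = (1 + lam) / 2 := Real.mul_self_sqrt (by linarith)
  have hβsq : β * β = (1 - lam) / 2 := Real.mul_self_sqrt (by linarith)
  have hβ : 0 ≤ β := Real.sqrt_nonneg _
  have hβ1 : β ≤ 1 := Real.sqrt_le_one.2 (by linarith)
  have hT : T * α = h + 1 := div_mul_cancel₀ _ hα.ne'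
  have hbox :
      Set.univ.pi ![Set.Icc T (T + 1), Set.Icc 0 1] ⊆ jointHalfspace h ![α, β] ![α, -β] := by
    intro a ha
    have ha₀ : a 0 ∈ Set.Icc T (T + 1) := ha 0 trivial
    have ha₁ : a 1 ∈ Set.Icc (0 : ℝ) 1 := ha 1 trivial
    have hsum : h + 1 ≤ a 0 * α := hT ▸ mul_le_mul_of_nonneg_right ha₀.1 hα.le
    have hdiff : a 1 * β ≤ 1 := mul_le_one₀ ha₁.2 hβ hβ1
    have hdiff' : 0 ≤ a 1 * β := mul_nonneg ha₁.1 hβ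
    have hx : a ⬝ᵥ ![α, β] = a 0 * α + a 1 * β := by simp [dotProduct]
    have hy : a ⬝ᵥ ![α, -β] = a 0 * α - a 1 * β := by simp [dotProduct, sub_eq_add_neg]
    exact ⟨by linarith, by linarith⟩
  have hmu : mu lam h = (gaussVec (Fin 2)).real (jointHalfspace h ![α, β] ![α, -β]) := by
    have hlam_eq : ![α, β] ⬝ᵥ ![α, -β] = lam := by
      rw [Matrix.vec2_dotProduct']; linarith
    rw [← hlam_eq]
    apply mu_dotProduct <;> rw [Matrix.vec2_dotProduct'] <;> linarith
  calc
    _ ≤ (gaussianReal 0 1).real (Set.Icc T (T + 1)) * (gaussianReal 0 1).real (Set.Icc 0 1) := by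
      have hT0 : 0 ≤ T := by positivity
      gcongr
      · exact gaussianPDFReal_nonneg _ _ _
      · simpa using mul_gaussianPDFReal_le_measureReal_Icc one_ne_zero hT0 (by linarith : T ≤ T + 1)
      · simpa using mul_gaussianPDFReal_le_measureReal_Icc one_ne_zero le_rfl zero_le_one
    _ = (gaussVec (Fin 2)).real (Set.univ.pi ![Set.Icc T (T + 1), Set.Icc 0 1]) := by
      simp [measureReal_def, Measure.pi_pi]
    _ ≤ mu lam h := hmu ▸ measureReal_mono hbox

lemma gaussianReal_real_Ici_self (μ : ℝ) {v : NNReal} (hv : v ≠ 0) :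
    (gaussianReal μ v).real (Set.Ici μ) = 1 / 2 := by
  have := nullSingletonClass_gaussianReal (μ := μ) hv
  have hreflect : (gaussianReal μ v).real (Set.Ici μ) = (gaussianReal μ v).real (Set.Iic μ) := by
    have hmap : (gaussianReal μ v).map (2 * μ - ·) = gaussianReal μ v := by
      rw [gaussianReal_map_const_sub]
      ring_nf
    nth_rewrite 1 [← hmap]
    rw [map_measureReal_apply (by fun_prop) measurableSet_Ici]
    congr 1
    ext z
    simp only [Set.mem_preimage, Set.mem_Ici, Set.mem_Iic]
    constructor <;> intro hz <;> linarith
  have hcompl : (gaussianReal μ v).real (Set.Ici μ) + (gaussianReal μ v).real (Set.Iio μ) = 1 := by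
    rw [← Set.compl_Ici, probReal_add_probReal_compl measurableSet_Ici]
  rw [measureReal_congr Iio_ae_eq_Iic, ← hreflect] at hcompl
  linarith

lemma mu_le_half (lam : ℝ) {h : ℝ} (hh : 0 ≤ h) : mu lam h ≤ 1 / 2 := by
  have hfst : (gaussPair lam).map Prod.fst = gaussianReal 0 1 := by
    rw [gaussPair, Measure.map_map measurable_fst (by fun_prop)]
    exact Measure.map_fst_prod.trans (by simp)
  have : IsProbabilityMeasure (gaussPair lam) :=
    Measure.isProbabilityMeasure_map (by fun_prop)
  calc
    mu lam h ≤ (gaussPair lam).real (Prod.fst ⁻¹' Set.Ici 0) :=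
      measureReal_mono fun p hp ↦ hh.trans hp.1
    _ = (gaussianReal 0 1).real (Set.Ici 0) := by
      rw [← hfst, map_measureReal_apply measurable_fst measurableSet_Ici]
    _ = 1 / 2 := gaussianReal_real_Ici_self 0 one_ne_zero

lemma tendsto_natCast_mul_gaussianPDFReal_atTop {k : ℝ} (hk : k ^ 2 < 2) (b : ℝ) :
    Tendsto (fun m : ℕ ↦ m * gaussianPDFReal 0 1 (k * √(Real.log m) + b)) atTop atTop := by
  have hs : Tendsto (fun m : ℕ ↦ √(Real.log m)) atTop atTop :=
    Real.tendsto_sqrt_atTop.comp (Real.tendsto_log_atTop.comp tendsto_natCast_atTop_atTop)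
  have hexponent : Tendsto (fun s : ℝ ↦ s * ((1 - k ^ 2 / 2) * s + -(k * b)) + -(b ^ 2 / 2))
      atTop atTop := by
    refine tendsto_atTop_add_const_right _ _ (tendsto_id.atTop_mul_atTop₀ ?_)
    exact tendsto_atTop_add_const_right _ _ (tendsto_id.const_mul_atTop (by linarith))
  refine ((Real.tendsto_exp_atTop.comp (hexponent.comp hs)).const_mul_atTop
    (by positivity : 0 < (√(2 * Real.pi))⁻¹)).congr' ?_
  filter_upwards [eventually_ge_atTop 1] with m hm
  have hm' : (1 : ℝ) ≤ m := by exact_mod_cast hm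
  have hm_exp : (m : ℝ) = Real.exp (√(Real.log m) ^ 2) := by
    rw [Real.sq_sqrt (Real.log_nonneg hm'), Real.exp_log (by positivity)]
  simp only [Function.comp_apply]
  generalize √(Real.log m) = s at hm_exp ⊢
  rw [hm_exp, gaussianPDFReal, mul_left_comm, ← Real.exp_add, NNReal.coe_one]
  ring_nf

lemma hthr_eq_mul_sqrt_log {r : ℝ} (hr : 0 ≤ r) (m : ℕ) :
    hthr r m = √(2 * r) * √(Real.log m) :=
  Real.sqrt_mul (by positivity) _

lemma tendsto_natCast_mul_muM_atTop {r lam : ℝ} (hr : 0 ≤ r) (hlam : 2 * r - 1 < lam)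
    (hlam' : lam ≤ 1) : Tendsto (fun m : ℕ ↦ m * muM r m lam) atTop atTop := by
  set α := √((1 + lam) / 2)
  have hαsq : α ^ 2 = (1 + lam) / 2 := Real.sq_sqrt (by linarith)
  have hslope : (√(2 * r) / α) ^ 2 < 2 := by
    rw [div_pow, hαsq, Real.sq_sqrt (by positivity), div_lt_iff₀ (by linarith)]
    linarith
  refine tendsto_atTop_mono (fun m ↦ ?_) <|
    (tendsto_natCast_mul_gaussianPDFReal_atTop hslope (1 / α + 1)).atTop_mul_const
      (gaussianPDFReal_pos 0 1 1 one_ne_zero)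
  have hpoint : √(2 * r) / α * √(Real.log m) + (1 / α + 1) = (hthr r m + 1) / α + 1 := by
    rw [hthr_eq_mul_sqrt_log hr]; ring
  rw [hpoint, mul_assoc]
  gcongr
  exact gaussianPDFReal_mul_le_mu (by linarith) hlam' (Real.sqrt_nonneg _)

lemma tendsto_natCast_mul_muM_mul_one_sub_atTop {r lam : ℝ} (hr : 0 ≤ r)
    (hlam : 2 * r - 1 < lam) (hlam' : lam ≤ 1) :
    Tendsto (fun m : ℕ ↦ m * (muM r m lam * (1 - muM r m lam))) atTop atTop := by
  refine tendsto_atTop_mono (fun m ↦ ?_) <|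
    (tendsto_natCast_mul_muM_atTop hr hlam hlam').atTop_mul_const (by norm_num : (0 : ℝ) < 1 / 2)
  have hnonneg : 0 ≤ muM r m lam := ENNReal.toReal_nonneg
  have hhalf : muM r m lam ≤ 1 / 2 := mu_le_half lam (Real.sqrt_nonneg _)
  rw [mul_assoc]
  gcongr
  linarith

end JointTail

section Score

variable {d : ℕ}

lemma unitVec.dotProduct_self {x : Fin d → ℝ} (hx : unitVec x) : x ⬝ᵥ x = 1 := by
  simpa [unitVec, dotProduct, pow_two] using hx

lemma muM_dotp {x y : Fin d → ℝ} (hx : unitVec x) (hy : unitVec y) (r : ℝ) (m : ℕ) :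
    muM r m (dotp x y) = (gaussVec (Fin d)).real (jointHalfspace (hthr r m) x y) :=
  mu_dotProduct hx.dotProduct_self hy.dotProduct_self _

lemma score_eq_sum_indicator (m : ℕ) (r : ℝ) (x y : Fin d → ℝ) (ω : Fin m → Fin d → ℝ) :
    score d m r x y ω = (∑ i, (jointHalfspace (hthr r m) x y).indicator 1 (ω i)) / m := by
  rw [score, one_div_mul_eq_div]
  congr 2 with i
  rw [ite_zero_mul_ite_zero, mul_one]
  split_ifs with hi
  · exact (Set.indicator_of_mem hi 1).symm
  · exact (Set.indicator_of_notMem hi 1).symm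

lemma standardized_score_eq_sum_standardizedIndicator {x y : Fin d → ℝ} (hx : unitVec x)
    (hy : unitVec y) (m : ℕ) (r : ℝ) (ω : Fin m → Fin d → ℝ) :
    √m * (score d m r x y ω - muM r m (dotp x y)) / sigM r m (dotp x y) =
      ∑ i, standardizedIndicator (gaussVec (Fin d)) (jointHalfspace (hthr r m) x y) m (ω i) := by
  have hsig : sigM r m (dotp x y) = √(muM r m (dotp x y) * (1 - muM r m (dotp x y))) := rfl
  simp only [standardizedIndicator]
  rw [← Finset.sum_div, Finset.sum_sub_distrib, score_eq_sum_indicator, ← muM_dotp hx hy, hsig,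
    Real.sqrt_mul m.cast_nonneg]
  generalize muM r m (dotp x y) = p
  rcases m.eq_zero_or_pos with rfl | hm
  · simp
  have hsqrt : 0 < √(m : ℝ) := Real.sqrt_pos.2 (by exact_mod_cast hm)
  have hsq : √(m : ℝ) * √(m : ℝ) = m := Real.mul_self_sqrt m.cast_nonneg
  rw [div_mul_eq_div_div, Finset.sum_const, Finset.card_univ, Fintype.card_fin, nsmul_eq_mul]
  congr 1
  rw [eq_div_iff hsqrt.ne', mul_right_comm, hsq]
  field_simp

theorem stmt1_general (r : ℝ) (hr : 0 ≤ r) (lam : ℝ) (hlam : 2 * r - 1 < lam)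
    (x y : Fin d → ℝ) (hx : unitVec x) (hy : unitVec y) (hxy : dotp x y = lam) (t : ℝ) :
    Tendsto (fun m : ℕ ↦
        ((Prob d m) {ω | √m * (score d m r x y ω - muM r m lam) / sigM r m lam < t}).toReal)
      atTop (𝓝 (Phi t)) := by
  subst hxy
  have hle : dotp x y ≤ 1 :=
    (le_abs_self _).trans (abs_dotProduct_le_one hx.dotProduct_self hy.dotProduct_self)
  have hvar := tendsto_natCast_mul_muM_mul_one_sub_atTop hr hlam hle
  simp_rw [muM_dotp hx hy] at hvar
  have hclt := tendstoInDistribution_sum_standardizedIndicator (P := fun _ ↦ gaussVec (Fin d))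
    (fun m ↦ measurableSet_jointHalfspace (hthr r m) x y) hvar
  have := nullSingletonClass_gaussianReal (μ := 0) one_ne_zero
  have hPhi : (gaussianReal 0 1).real {z | id z < t} = Phi t := measureReal_congr Iio_ae_eq_Iic
  have hlim := tendsto_measureReal_lt_of_tendstoInDistribution hclt (measure_singleton t)
  simp_rw [hPhi, ← standardized_score_eq_sum_standardizedIndicator hx hy] at hlim
  exact hlim

end Score

/-- Case 2 of Lemma 1: the normalized score converges in
distribution to a standard normal. -/
theorem stmt1 {d : ℕ} (hd : 1 ≤ d) (r : ℝ) (hr : r ∈ Set.Ioo (0 : ℝ) 1)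
    (lam : ℝ) (hlam : lam ∈ Set.Ioo (2 * r - 1) 1)
    (x y : Fin d → ℝ) (hx : unitVec x) (hy : unitVec y) (hxy : dotp x y = lam) :
    ∀ t : ℝ,
      Tendsto (fun m : ℕ =>
          ((Prob d m) {ω | Real.sqrt m * (score d m r x y ω - muM r m lam) / sigM r m lam < t}).toReal)
        atTop (nhds (Phi t)) := by
  exact stmt1_general r hr.1.le lam hlam.1 x y hx hy hxy

end
end
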